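/- Condition (ii) of the main theorem is achievable by taking enough levels: for every fixed σ > 0, the differential entropy of the aliased Gaussian noise converges to the differential entropy of the Gaussian as the lattice becomes coarse, i.e., lim_{α→∞} h(α,σ) = (1/2)·log(2πeσ²). -/

import Mathlib

open MeasureTheory Real Filter

/-- The Gaussian density with zero mean and standard deviation `σ`. -/
noncomputable def gaussDen (σ x : ℝ) : ℝ :=
  (Real.sqrt (2 * Real.pi * σ ^ 2))⁻¹ * Real.exp (-x ^ 2 / (2 * σ ^ 2))

/-- The `αℤ`-aliased Gaussian density `f_{σ,α}(x) = Σ_{k∈ℤ} g_σ(x − kα)`. -/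
noncomputable def aliasedDen (σ α x : ℝ) : ℝ := ∑' k : ℤ, gaussDen σ (x - (k : ℝ) * α)

/-- The differential entropy `h(α,σ)` of the `αℤ`-aliased Gaussian noise
on the fundamental region `[0, α)`. -/
noncomputable def aliasedEnt (α σ : ℝ) : ℝ :=
  -∫ x in Set.Ico (0 : ℝ) α, aliasedDen σ α x * Real.log (aliasedDen σ α x)

noncomputable def auxB (c : ℝ) (k : ℤ) : ℝ := Real.exp c * Real.exp (-c) ^ k.natAbs

lemma auxPow (r : ℝ) (h0 : 0 ≤ r) (h1 : r < 1) : Summable (fun k : ℤ => r ^ k.natAbs) := by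
  apply summable_int_iff_summable_nat_and_neg.2
  constructor
  · simpa using summable_geometric_of_lt_one h0 h1
  · simpa using summable_geometric_of_lt_one h0 h1

lemma auxB_summable {c : ℝ} (hc : 0 < c) : Summable (auxB c) :=
  (auxPow _ (Real.exp_pos _).le (by simpa using hc)).mul_left _

lemma gaussDen_pos {σ : ℝ} (hσ : 0 < σ) (x : ℝ) : 0 < gaussDen σ x := by
  unfold gaussDen; positivity

lemma gaussDen_cont (σ : ℝ) : Continuous (gaussDen σ) := by
  unfold gaussDen; fun_prop

lemma gaussDen_eq {σ : ℝ} (x : ℝ) : gaussDen σ x =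
    (Real.sqrt (2 * Real.pi * σ ^ 2))⁻¹ * Real.exp (-(1 / (2 * σ ^ 2)) * x ^ 2) := by
  unfold gaussDen; congr 2; ring

lemma key {σ : ℝ} (hσ : 0 < σ) {α x : ℝ} (hα : 1 ≤ α) (hx : |x| ≤ α / 2) (k : ℤ) :
    gaussDen σ (x - k * α) ≤ gaussDen σ x * auxB (1 / (2 * σ ^ 2)) k := by
  have hc : 0 < 1 / (2 * σ ^ 2) := by positivity
  rw [gaussDen_eq, gaussDen_eq, auxB, ← Real.exp_nat_mul, ← Real.exp_add, mul_assoc (Real.sqrt (2 * Real.pi * σ ^ 2))⁻¹,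
    ← Real.exp_add]
  gcongr
  set c := 1 / (2 * σ ^ 2)
  have hk : ((k.natAbs : ℕ) : ℝ) = |(k : ℝ)| := by
    rw [Nat.cast_natAbs]; simp
  rw [hk]
  have h1 : (k : ℝ) * x ≤ |(k : ℝ)| * (α / 2) := by
    calc (k : ℝ) * x ≤ |(k : ℝ) * x| := le_abs_self _
      _ = |(k : ℝ)| * |x| := abs_mul _ _
      _ ≤ _ := by gcongr
  have hkk : 0 ≤ |(k : ℝ)| * (|(k : ℝ)| - 1) := by
    rcases eq_or_ne k 0 with h | h
    · simp [h]
    · have : (1 : ℝ) ≤ |(k : ℝ)| := by exact_mod_cast Int.one_le_abs h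
      nlinarith
  have h2 : x ^ 2 - 1 + |(k : ℝ)| ≤ (x - k * α) ^ 2 := by
    have e : (x - k * α) ^ 2 = x ^ 2 - 2 * α * (k * x) + |(k : ℝ)| ^ 2 * α ^ 2 := by
      rw [sq_abs]; ring
    have h3 : α * ((k : ℝ) * x) ≤ α * (|(k : ℝ)| * (α / 2)) := by gcongr
    have h4 : |(k : ℝ)| * (|(k : ℝ)| - 1) * 1 ≤ |(k : ℝ)| * (|(k : ℝ)| - 1) * α ^ 2 := by
      gcongr; nlinarith
    nlinarith [sq_nonneg (|(k : ℝ)| - 1)]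
  nlinarith

lemma summ {σ : ℝ} (hσ : 0 < σ) {α : ℝ} (hα : 0 < α) (x : ℝ) :
    Summable (fun k : ℤ => gaussDen σ (x - k * α)) := by
  have hc : 0 < 1 / (2 * σ ^ 2) := by positivity
  have hs := (auxPow (Real.exp (-(1 / (2 * σ ^ 2) * (α ^ 2 / 2)))) (Real.exp_pos _).le
    (by rw [Real.exp_lt_one_iff]; simp only [Left.neg_neg_iff]; positivity)).mul_left
    ((Real.sqrt (2 * Real.pi * σ ^ 2))⁻¹ * Real.exp (1 / (2 * σ ^ 2) * x ^ 2))
  refine Summable.of_nonneg_of_le (fun k => (gaussDen_pos hσ _).le) (fun k => ?_) hs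
  rw [gaussDen_eq, ← Real.exp_nat_mul, mul_assoc (Real.sqrt (2 * Real.pi * σ ^ 2))⁻¹,
    ← Real.exp_add]
  gcongr
  set c := 1 / (2 * σ ^ 2)
  have hk : ((k.natAbs : ℕ) : ℝ) = |(k : ℝ)| := by
    rw [Nat.cast_natAbs]; simp
  rw [hk]
  have hkk : |(k : ℝ)| ≤ k ^ 2 := by
    rw [← sq_abs]
    rcases eq_or_ne k 0 with h | h
    · simp [h]
    · have : (1 : ℝ) ≤ |(k : ℝ)| := by exact_mod_cast Int.one_le_abs h
      nlinarith
  have h2 : |(k : ℝ)| * (α ^ 2 / 2) - x ^ 2 ≤ (x - k * α) ^ 2 := by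
    have : |(k : ℝ)| * (α ^ 2 / 2) ≤ k ^ 2 * (α ^ 2 / 2) := by gcongr
    nlinarith [sq_nonneg (2 * x - k * α)]
  nlinarith

lemma aliased_meas {σ : ℝ} (hσ : 0 < σ) {α : ℝ} (hα : 0 < α) : Measurable (aliasedDen σ α) := by
  have h : Tendsto (fun (s : Finset ℤ) (x : ℝ) => ∑ k ∈ s, gaussDen σ (x - k * α)) atTop
      (nhds (aliasedDen σ α)) := by
    rw [tendsto_pi_nhds]
    intro x
    exact (summ hσ hα x).hasSum
  refine measurable_of_tendsto_metrizable' atTop (fun s => ?_) h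
  refine Finset.measurable_sum _ (fun k _ => ?_)
  exact ((gaussDen_cont σ).comp (by fun_prop)).measurable

lemma aliased_periodic (σ α : ℝ) : Function.Periodic (aliasedDen σ α) α := by
  intro x
  unfold aliasedDen
  rw [← (Equiv.addRight (1 : ℤ)).tsum_eq]
  congr 1; ext k; congr 1
  simp; ring

lemma aliased_ge {σ : ℝ} (hσ : 0 < σ) {α : ℝ} (hα : 0 < α) (x : ℝ) :
    gaussDen σ x ≤ aliasedDen σ α x := by
  have := (summ hσ hα x).le_tsum 0 (fun k _ => (gaussDen_pos hσ _).le)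
  simpa [aliasedDen] using this

lemma aliased_le {σ : ℝ} (hσ : 0 < σ) {α x : ℝ} (hα : 1 ≤ α) (hx : |x| ≤ α / 2) :
    aliasedDen σ α x ≤ gaussDen σ x * ∑' k, auxB (1 / (2 * σ ^ 2)) k := by
  rw [← tsum_mul_left]
  exact (summ hσ (by linarith) x).tsum_le_tsum (key hσ hα hx)
    ((auxB_summable (by positivity)).mul_left _)

lemma aliased_tendsto {σ : ℝ} (hσ : 0 < σ) (x : ℝ) :
    Tendsto (fun α => aliasedDen σ α x) atTop (nhds (gaussDen σ x)) := by
  have hc : 0 < 1 / (2 * σ ^ 2) := by positivity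
  have h := tendsto_tsum_of_dominated_convergence (𝓕 := atTop)
    (f := fun (α : ℝ) (k : ℤ) => gaussDen σ (x - k * α))
    (g := fun k : ℤ => if k = 0 then gaussDen σ x else 0)
    ((auxB_summable hc).mul_left (gaussDen σ x)) ?_ ?_
  · simpa [aliasedDen] using h
  · intro k
    rcases eq_or_ne k 0 with h | h
    · simp [h]
    · simp only [h, if_false, gaussDen_eq]
      rw [← mul_zero (Real.sqrt (2 * Real.pi * σ ^ 2))⁻¹]
      refine Tendsto.const_mul _ (Real.tendsto_exp_atBot.comp ?_)
      refine Tendsto.const_mul_atTop_of_neg (by linarith) ?_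
      have hk : (0 : ℝ) < |(k : ℝ)| := by simpa using h
      have h1 : Tendsto (fun α : ℝ => |x - k * α|) atTop atTop := by
        refine tendsto_atTop_mono (f := fun α : ℝ => |(k : ℝ)| * α + (- |x|)) (fun α => ?_) ?_
        · have := abs_sub_abs_le_abs_sub ((k : ℝ) * α) x
          rw [abs_sub_comm, abs_mul] at this
          have h3 := mul_le_mul_of_nonneg_left (le_abs_self α) hk.le
          linarith
        · exact tendsto_atTop_add_const_right _ _ (tendsto_id.const_mul_atTop hk)
      have h2 := (tendsto_pow_atTop (α := ℝ) (two_ne_zero)).comp h1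
      refine h2.congr (fun α => ?_)
      simp
  · filter_upwards [eventually_ge_atTop 1, eventually_ge_atTop (2 * |x|)] with α h1 h2 k
    rw [Real.norm_of_nonneg (gaussDen_pos hσ _).le]
    exact key hσ h1 (by linarith) k

lemma log_gaussDen {σ : ℝ} (hσ : 0 < σ) (x : ℝ) : Real.log (gaussDen σ x) =
    - Real.log (Real.sqrt (2 * Real.pi * σ ^ 2)) - 1 / (2 * σ ^ 2) * x ^ 2 := by
  rw [gaussDen_eq, Real.log_mul (by positivity) (by positivity), Real.log_exp, Real.log_inv]
  ring

lemma gaussDen_pdf {σ : ℝ} (hσ : 0 < σ) :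
    gaussDen σ = ProbabilityTheory.gaussianPDFReal 0 (Real.toNNReal (σ ^ 2)) := by
  ext x
  simp [gaussDen, ProbabilityTheory.gaussianPDFReal, Real.coe_toNNReal _ (sq_nonneg σ)]

lemma int_g {σ : ℝ} (hσ : 0 < σ) : Integrable (gaussDen σ) := by
  rw [gaussDen_pdf hσ]
  exact ProbabilityTheory.integrable_gaussianPDFReal _ _

lemma int_xg {σ : ℝ} (hσ : 0 < σ) : Integrable (fun x => gaussDen σ x * x ^ 2) := by
  have h := (integrable_rpow_mul_exp_neg_mul_sq (b := 1 / (2 * σ ^ 2)) (by positivity)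
    (s := 2) (by norm_num)).const_mul (Real.sqrt (2 * Real.pi * σ ^ 2))⁻¹
  refine h.congr (Eventually.of_forall fun x => ?_)
  simp only [gaussDen_eq, Real.rpow_two]
  ring

lemma integral_g {σ : ℝ} (hσ : 0 < σ) : ∫ x, gaussDen σ x = 1 := by
  rw [gaussDen_pdf hσ]
  refine ProbabilityTheory.integral_gaussianPDFReal_eq_one _ ?_
  exact (Real.toNNReal_pos.2 (by positivity)).ne'

lemma integral_xg {σ : ℝ} (hσ : 0 < σ) : ∫ x, gaussDen σ x * x ^ 2 = σ ^ 2 := by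
  have hv : (Real.toNNReal (σ ^ 2)) ≠ 0 := by
    exact (Real.toNNReal_pos.2 (by positivity)).ne'
  have h := ProbabilityTheory.variance_id_gaussianReal (μ := 0) (v := (Real.toNNReal (σ ^ 2)))
  rw [ProbabilityTheory.variance_of_integral_eq_zero (by fun_prop)
    (by simp only [id]; exact ProbabilityTheory.integral_id_gaussianReal),
    ProbabilityTheory.integral_gaussianReal_eq_integral_smul hv, ← gaussDen_pdf hσ] at h
  simpa [Real.coe_toNNReal _ (sq_nonneg σ)] using h

lemma final_int {σ : ℝ} (hσ : 0 < σ) : ∫ x, gaussDen σ x * Real.log (gaussDen σ x) =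
    - ((1 / 2 : ℝ) * Real.log (2 * Real.pi * Real.exp 1 * σ ^ 2)) := by
  have e : ∀ x, gaussDen σ x * Real.log (gaussDen σ x) =
      (- Real.log (Real.sqrt (2 * Real.pi * σ ^ 2))) * gaussDen σ x
        - 1 / (2 * σ ^ 2) * (gaussDen σ x * x ^ 2) := by
    intro x; rw [log_gaussDen hσ]; ring
  simp_rw [e]
  rw [integral_sub ((int_g hσ).const_mul _) ((int_xg hσ).const_mul _), integral_const_mul,
    integral_const_mul, integral_g hσ, integral_xg hσ, Real.log_sqrt (by positivity),
    show 2 * Real.pi * Real.exp 1 * σ ^ 2 = (2 * Real.pi * σ ^ 2) * Real.exp 1 by ring,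
    Real.log_mul (x := 2 * Real.pi * σ ^ 2) (by positivity) (Real.exp_ne_zero 1), Real.log_exp]
  field_simp
  ring

lemma ent_eq {σ α : ℝ} (hα : 0 < α) : aliasedEnt α σ =
    - ∫ x, (Set.Ioc (-(α / 2)) (α / 2)).indicator
      (fun x => aliasedDen σ α x * Real.log (aliasedDen σ α x)) x := by
  unfold aliasedEnt
  have hp : Function.Periodic (fun x => aliasedDen σ α x * Real.log (aliasedDen σ α x)) α := by
    intro x; simp only [aliased_periodic σ α x]
  have h := hp.intervalIntegral_add_eq 0 (-(α / 2))
  rw [integral_Ico_eq_integral_Ioc, integral_indicator measurableSet_Ioc,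
    ← intervalIntegral.integral_of_le hα.le, ← intervalIntegral.integral_of_le (by linarith)]
  rw [zero_add, show -(α / 2) + α = α / 2 by ring] at h
  rw [h]

/-- condition (ii) of the main theorem is achievable by taking enough levels:
for fixed `σ > 0`, `h(α,σ) → (1/2)·log(2πeσ²)` as `α → ∞`. -/
theorem aliasedEnt_tendsto_gaussian_entropy (σ : ℝ) (hσ : 0 < σ) :
    Filter.Tendsto (fun α : ℝ => aliasedEnt α σ) Filter.atTop
      (nhds ((1 / 2 : ℝ) * Real.log (2 * Real.pi * Real.exp 1 * σ ^ 2))) := by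
  rw [← neg_neg ((1 / 2 : ℝ) * Real.log (2 * Real.pi * Real.exp 1 * σ ^ 2)), ← final_int hσ]
  have hev : ∀ᶠ α : ℝ in atTop, - ∫ x, (Set.Ioc (-(α / 2)) (α / 2)).indicator
      (fun x => aliasedDen σ α x * Real.log (aliasedDen σ α x)) x = aliasedEnt α σ := by
    filter_upwards [eventually_gt_atTop 0] with α hα using (ent_eq hα).symm
  refine Tendsto.congr' hev (Tendsto.neg ?_)
  set c := 1 / (2 * σ ^ 2) with hcdef
  have hc : 0 < c := by positivity
  set C := ∑' k, auxB c k with hC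
  have hC1 : 1 ≤ C := by
    have := (auxB_summable hc).le_tsum 0 (fun k _ => by unfold auxB; positivity)
    refine le_trans ?_ this
    simp [auxB, hc.le]
  set L := |Real.log (Real.sqrt (2 * Real.pi * σ ^ 2))| with hL
  have hlC : 0 ≤ Real.log C := Real.log_nonneg hC1
  refine tendsto_integral_filter_of_dominated_convergence
    (fun x => C * (L + Real.log C) * gaussDen σ x + C * c * (gaussDen σ x * x ^ 2)) ?_ ?_ ?_ ?_
  · filter_upwards [eventually_gt_atTop 0] with α hα
    have hm := aliased_meas hσ hα
    exact ((hm.mul (Real.measurable_log.comp hm)).indicator measurableSet_Ioc).aestronglyMeasurable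
  · filter_upwards [eventually_ge_atTop 1] with α hα
    refine Eventually.of_forall fun x => ?_
    have hg := gaussDen_pos hσ x
    by_cases hx : x ∈ Set.Ioc (-(α / 2)) (α / 2)
    · rw [Set.indicator_of_mem hx]
      have h1 := aliased_ge hσ (by linarith : 0 < α) x
      have h2 := aliased_le hσ hα (abs_le.2 ⟨hx.1.le, hx.2⟩)
      rw [← hcdef, ← hC] at h2
      have hf : 0 < aliasedDen σ α x := hg.trans_le h1
      have l1 := Real.log_le_log hg h1
      have l2 := Real.log_le_log hf h2
      rw [Real.log_mul hg.ne' (by linarith)] at l2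
      rw [log_gaussDen hσ, ← hcdef] at l1 l2
      have a1 := le_abs_self (Real.log (Real.sqrt (2 * Real.pi * σ ^ 2)))
      have a2 := neg_abs_le (Real.log (Real.sqrt (2 * Real.pi * σ ^ 2)))
      rw [← hL] at a1 a2
      have hcx : 0 ≤ c * x ^ 2 := by positivity
      have hlog : |Real.log (aliasedDen σ α x)| ≤ L + Real.log C + c * x ^ 2 := by
        rw [abs_le]; constructor <;> linarith
      rw [norm_mul, Real.norm_of_nonneg hf.le, Real.norm_eq_abs]
      calc _ ≤ (gaussDen σ x * C) * (L + Real.log C + c * x ^ 2) := by gcongr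
        _ = _ := by ring
    · rw [Set.indicator_of_notMem hx, norm_zero]
      positivity
  · exact ((int_g hσ).const_mul _).add ((int_xg hσ).const_mul _)
  · refine Eventually.of_forall fun x => ?_
    have ht := aliased_tendsto hσ x
    have hlim := ht.mul (ht.log (gaussDen_pos hσ x).ne')
    refine hlim.congr' ?_
    filter_upwards [eventually_gt_atTop (2 * |x|)] with α hα
    rw [Set.indicator_of_mem]
    have := abs_lt.1 (show |x| < α / 2 by linarith)
    exact ⟨this.1, this.2.le⟩
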